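/- arXiv:2001.10180 — 2 statements merged into one kernel-verified Lean document; each statement's English description precedes it below -/
import Mathlib

section
/- Let n ≥ 1, let b, c ∈ ℝⁿ have nonnegative entries, and let F := {(x, y) ∈ ℝⁿ × ℝⁿ : 0 ≤ x_k, x_k² ≤ b_k, 0 ≤ y_k, y_k² ≤ c_k for all k}. If (x*, y*) ∈ F maximizes the function f(x, y) = (Σ_k x_k y_k)² / (1 + Σ_k x_k²) over F, then for every index m with x*_m > 0 it holds that y*_m = √(c_m). -/
/-! For fixed `x ≥ 0` the numerator `(∑ x_k y_k) ^ 2` is nondecreasing in each `y_k ≥ 0`, and the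
denominator does not depend on `y`. Hence `(x*, √c)`, which is feasible, does at least as well as
`(x*, y*)`, and strictly better if `y*_m < √(c_m)` at some `m` with `x*_m > 0`. -/

/-- Proposition 3(iii): at a maximizer of (Σ x_k y_k)² / (1 + Σ x_k²) over the box
F = {(x,y) : 0 ≤ x_k, x_k² ≤ b_k, 0 ≤ y_k, y_k² ≤ c_k}, the constraint on y holds with
equality (y_m = √(c_m)) at every coordinate m where x_m > 0. -/
theorem optimal_y_at_bound (n : ℕ) (hn : 1 ≤ n) (b c : Fin n → ℝ)
    (hb : ∀ k, 0 ≤ b k) (hc : ∀ k, 0 ≤ c k)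
    (F : Set ((Fin n → ℝ) × (Fin n → ℝ)))
    (hF : F = {p | ∀ k, 0 ≤ p.1 k ∧ (p.1 k) ^ 2 ≤ b k ∧ 0 ≤ p.2 k ∧ (p.2 k) ^ 2 ≤ c k})
    (xs ys : Fin n → ℝ) (hmem : (xs, ys) ∈ F)
    (hmax : ∀ p ∈ F, (∑ k, p.1 k * p.2 k) ^ 2 / (1 + ∑ k, (p.1 k) ^ 2)
        ≤ (∑ k, xs k * ys k) ^ 2 / (1 + ∑ k, (xs k) ^ 2)) :
    ∀ m, 0 < xs m → ys m = Real.sqrt (c m) := by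
  subst hF
  intro m hm
  have hle : ∀ k, ys k ≤ √(c k) := fun k => Real.le_sqrt_of_sq_le (hmem k).2.2.2
  by_contra hne
  have hlt : ys m < √(c m) := lt_of_le_of_ne (hle m) hne
  have hsum : ∑ k, xs k * ys k < ∑ k, xs k * √(c k) :=
    Finset.sum_lt_sum (fun k _ => mul_le_mul_of_nonneg_left (hle k) (hmem k).1)
      ⟨m, Finset.mem_univ m, mul_lt_mul_of_pos_left hlt hm⟩
  have hnonneg : 0 ≤ ∑ k, xs k * ys k :=
    Finset.sum_nonneg fun k _ => mul_nonneg (hmem k).1 (hmem k).2.2.1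
  have hden : 0 < 1 + ∑ k, xs k ^ 2 := by positivity
  have hopt := hmax (xs, fun k => √(c k)) fun k =>
    ⟨(hmem k).1, (hmem k).2.1, Real.sqrt_nonneg _, (Real.sq_sqrt (hc k)).le⟩
  have hsq := (div_le_div_iff_of_pos_right hden).1 hopt
  exact absurd hsq (not_le.2 (pow_lt_pow_left₀ hsum hnonneg two_ne_zero))
end

section
/- Let η > 0, p_t > 0, g > 0, s > 0, define x̄(ρ) := (η ρ p_t s² g²) / (1 + (1 − ρ) p_t s²) and ȳ(ρ) := (1 − ρ) p_t s². Let ρ ∈ (0, 1) and let x̂ ≥ 0 satisfy x̂² < x̄(ρ). Then there exists Δ with 0 < Δ < ρ such that x̂² ≤ x̄(ρ − Δ) < x̄(ρ) and ȳ(ρ) < ȳ(ρ − Δ). -/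
/-!
On `(0, 1]` the numerator of `xbar` is positive and strictly increasing in `ρ` while its
denominator is positive and strictly decreasing, so every decrease of `ρ` within `(0, ρ)` strictly
lowers `xbar` and strictly raises `ybar`. Since the denominator does not vanish, `xbar` is
continuous at `ρ`, so the strict inequality `xhat ^ 2 < xbar ρ` survives all small enough decreases.
-/

/-- Proposition 4: if the amplifying constraint x̂² ≤ x̄(ρ) is slack, the power-splitting
ratio ρ can be decreased by some Δ ∈ (0, ρ) so that x̂² ≤ x̄(ρ−Δ) < x̄(ρ) while
ȳ(ρ) < ȳ(ρ−Δ). -/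
theorem decrease_rho (η pt g s : ℝ) (hη : 0 < η) (hpt : 0 < pt) (hg : 0 < g) (hs : 0 < s)
    (xbar ybar : ℝ → ℝ)
    (hxbar : xbar = fun ρ : ℝ => η * ρ * pt * s ^ 2 * g ^ 2 / (1 + (1 - ρ) * pt * s ^ 2))
    (hybar : ybar = fun ρ : ℝ => (1 - ρ) * pt * s ^ 2)
    (ρ : ℝ) (hρ : ρ ∈ Set.Ioo (0 : ℝ) 1) (xhat : ℝ) (hxhat : 0 ≤ xhat)
    (hslack : xhat ^ 2 < xbar ρ) :
    ∃ Δ : ℝ, 0 < Δ ∧ Δ < ρ ∧ xhat ^ 2 ≤ xbar (ρ - Δ) ∧ xbar (ρ - Δ) < xbar ρ ∧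
      ybar ρ < ybar (ρ - Δ) := by
  obtain ⟨h0, h1⟩ := hρ
  have hden : 0 < 1 + (1 - ρ) * pt * s ^ 2 := by
    have : 0 < 1 - ρ := by linarith
    positivity
  have hcont : ContinuousAt (fun Δ : ℝ => xbar (ρ - Δ)) 0 := by
    subst hxbar
    refine ContinuousAt.div (by fun_prop) (by fun_prop) ?_
    simpa using hden.ne'
  have hev : ∀ᶠ Δ in nhdsWithin (0 : ℝ) (Set.Ioi 0), xhat ^ 2 < xbar (ρ - Δ) :=
    (hcont.eventually (lt_mem_nhds (by simpa using hslack))).filter_mono nhdsWithin_le_nhds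
  obtain ⟨Δ, hΔ, hΔ0, hΔρ⟩ := (hev.and (Ioo_mem_nhdsGT h0)).exists
  have hps : 0 < pt * s ^ 2 := by positivity
  have hc : 0 < η * pt * s ^ 2 * g ^ 2 := by positivity
  refine ⟨Δ, hΔ0, hΔρ, hΔ.le, ?_, ?_⟩
  · subst hxbar
    refine div_lt_div₀ ?_ ?_ ?_ hden
    · nlinarith [mul_pos hc hΔ0]
    · nlinarith [mul_pos hps hΔ0]
    · positivity
  · subst hybar
    change (1 - ρ) * pt * s ^ 2 < (1 - (ρ - Δ)) * pt * s ^ 2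
    nlinarith [mul_pos hps hΔ0]
end
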